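/- Let n ≥ 3 and q = ⌊n/3⌋. The expected number of napkinless diners under an optimal strategy, when all 2^n preference orders are equally likely, is E_n = 2^{−n} ∑_{σ∈{±1}^n} ν_max(σ) = q − (1/2^{n−2}) ∑_{k=0}^{q−1} (q−k)·C(n,k). Equivalently, ∑_{σ∈{±1}^n} ν_max(σ) = 2^n·q − 4·∑_{k=0}^{q−1} (q−k)·C(n,k). -/

import Mathlib

namespace Napkin

variable {n q : ℕ}

/-- The napkin to the left of seat `s`; napkin `s` itself is the one to the right of
seat `s`, placed between seats `s` and `s + 1` around the circular table. -/
def leftNapkin (s : Fin n) : Fin n := ⟨((s : ℕ) + (n - 1)) % n, Nat.mod_lt _ s.pos⟩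

/-- Process the diners `0, 1, …, n-1` in their arrival order.  Here `w i = j` means that
diner `j` sits in seat `i` (so diner `j` sits in seat `w.symm j`), and `σ j = true`
means diner `j` prefers the napkin to their right.  Each diner takes their preferred
adjacent napkin if it is unclaimed, otherwise the other adjacent napkin if it is
unclaimed, and otherwise is napkinless.  The returned state consists of the set of
claimed napkins and the set of napkinless diners. -/
def dine (σ : Fin n → Bool) (w : Equiv.Perm (Fin n)) :
    Finset (Fin n) × Finset (Fin n) :=
  (List.finRange n).foldl
    (fun st j =>
      let s := w.symm j
      let pref := if σ j then s else leftNapkin s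
      let other := if σ j then leftNapkin s else s
      if pref ∉ st.1 then (insert pref st.1, st.2)
      else if other ∉ st.1 then (insert other st.1, st.2)
      else (st.1, insert j st.2))
    (∅, ∅)

/-- The set of napkinless diners for the seating arrangement `(w, σ)`. -/
def napkinless (σ : Fin n → Bool) (w : Equiv.Perm (Fin n)) : Finset (Fin n) :=
  (dine σ w).2

/-- `ν(w,σ)`, the number of napkinless diners. -/
def nu (σ : Fin n → Bool) (w : Equiv.Perm (Fin n)) : ℕ := (napkinless σ w).card

/-- A seating order puts diner `1` in seat `1` (index `0` here). -/
def IsSeating (w : Equiv.Perm (Fin n)) : Prop :=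
  ∀ i : Fin n, (i : ℕ) = 0 → (w i : ℕ) = 0

instance : DecidablePred (IsSeating (n := n)) := fun w =>
  decidable_of_iff (∀ i : Fin n, (i : ℕ) = 0 → (w i : ℕ) = 0) Iff.rfl

/-- `ν_max(σ)`, the maximal number of napkinless diners over all seating orders. -/
def nuMax (σ : Fin n → Bool) : ℕ :=
  (Finset.univ.filter fun w : Equiv.Perm (Fin n) => IsSeating w).sup (nu σ)

/-- The value `±1` of a napkin preference. -/
def sign (b : Bool) : ℤ := if b then 1 else -1

/-- The drift `h(σ) = max(0, max over prefixes of σ₁ + ⋯ + σᵢ)`. -/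
def drift (σ : Fin n → Bool) : ℕ :=
  (Finset.range (n + 1)).sup fun i =>
    (∑ j ∈ Finset.univ.filter (fun j : Fin n => (j : ℕ) < i), sign (σ j)).toNat

/-- A bench collection: `q` pairwise disjoint triples `aᵢ < bᵢ < cᵢ` in `{1,…,n}`. -/
structure BenchCollection (n q : ℕ) where
  a : Fin q → Fin n
  b : Fin q → Fin n
  c : Fin q → Fin n
  hab : ∀ i, a i < b i
  hbc : ∀ i, b i < c i
  disj : ∀ i j : Fin q, i ≠ j →
    Disjoint ({a i, b i, c i} : Finset (Fin n)) ({a j, b j, c j} : Finset (Fin n))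

/-- A bench is balanced when its two smallest members have opposite preferences. -/
def Balanced (σ : Fin n → Bool) (β : BenchCollection n q) (i : Fin q) : Prop :=
  sign (σ (β.a i)) + sign (σ (β.b i)) = 0

instance (σ : Fin n → Bool) (β : BenchCollection n q) :
    DecidablePred (Balanced σ β) := fun i =>
  decidable_of_iff (sign (σ (β.a i)) + sign (σ (β.b i)) = 0) Iff.rfl

/-- `b(β,σ)`, the number of balanced benches of `β`. -/
def balance (σ : Fin n → Bool) (β : BenchCollection n q) : ℕ :=
  (Finset.univ.filter fun i => Balanced σ β i).card

/-!
Walking around the table in either direction from a napkinless diner, the claims seen point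
towards that diner until, still before another napkinless diner, one meets somebody who arrived
earlier and claimed the preferred napkin. Every napkinless diner thus closes a balanced bench,
and these benches are disjoint. Conversely a collection of balanced benches can be seated
consecutively so that the last member of each of them goes napkinless. Hence `nuMax σ` is the
largest size of a collection of balanced benches.

A collection of `k` balanced benches exists if and only if `3 * k ≤ n` and the drifts of `σ` and
of its negation are at most `n - 2 * k`: for the converse, match the first `k` diners preferring
right and the first `k` preferring left with the last `k` of the other diners. When `3 * k ≤ n`,
the two drift bounds cannot both fail, and the reflection principle counts the `σ` violating one
of them as `2 * ∑ j < k, n.choose j`. Summing over `k ≤ n / 3` gives the formula.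
-/

open Finset

lemma eq_of_iterate_eq_iterate {α : Type*} {f : α → α} (hf : f.Injective) {s : Set α} {x y : α}
    {d e : ℕ} (hx : x ∈ s) (hy : y ∈ s) (hxd : ∀ m < d, f^[m + 1] x ∉ s)
    (hye : ∀ m < e, f^[m + 1] y ∉ s) (h : f^[d] x = f^[e] y) : x = y := by
  wlog hle : d ≤ e generalizing x y d e
  · exact (this hy hx hye hxd h.symm (le_of_not_ge hle)).symm
  obtain ⟨c, rfl⟩ := Nat.exists_eq_add_of_le hle
  rw [Function.iterate_add_apply] at h
  obtain rfl := hf.iterate d h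
  cases c with
  | zero => rfl
  | succ m => exact absurd hx (hye m (by omega))

section Rank

variable {α : Type*} [LinearOrder α]

/-- The number of elements of `s` below `x`; on `s` this is the position of `x`, counted
from `0`, in the increasing enumeration of `s`. -/
def rank (s : Finset α) (x : α) : ℕ := #{y ∈ s | y < x}

lemma rank_lt_rank {s : Finset α} {x y : α} (hx : x ∈ s) (hxy : x < y) : rank s x < rank s y := by
  refine card_lt_card ⟨fun z => ?_, fun h => ?_⟩
  · simp only [mem_filter]
    exact fun hz => ⟨hz.1, hz.2.trans hxy⟩
  · simpa using h (mem_filter.2 ⟨hx, hxy⟩)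

lemma rank_lt_card {s : Finset α} {x : α} (hx : x ∈ s) : rank s x < #s :=
  card_lt_card (filter_ssubset.2 ⟨x, hx, lt_irrefl x⟩)

lemma rank_mono (s : Finset α) : Monotone (rank s) := fun _ _ h =>
  card_le_card (monotone_filter_right s fun _ _ hz => hz.trans_le h)

lemma lt_of_rank_lt_rank {s : Finset α} {x y : α} (h : rank s x < rank s y) : x < y :=
  (rank_mono s).reflect_lt h

lemma rank_injOn (s : Finset α) : Set.InjOn (rank s) s :=
  StrictMonoOn.injOn fun _ hx _ _ hxy => rank_lt_rank hx hxy

lemma image_rank (s : Finset α) : s.image (rank s) = range #s := by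
  refine eq_of_subset_of_card_le (fun i hi => ?_) ?_
  · obtain ⟨x, hx, rfl⟩ := mem_image.1 hi
    exact mem_range.2 (rank_lt_card hx)
  · rw [card_range, card_image_of_injOn (rank_injOn s)]

lemma exists_mem_rank_eq {s : Finset α} {i : ℕ} (hi : i < #s) : ∃ x ∈ s, rank s x = i := by
  rwa [← mem_range, ← image_rank, mem_image] at hi

lemma card_filter_le_rank (s : Finset α) (k : ℕ) : #{x ∈ s | k ≤ rank s x} = #s - k := by
  have himage : image (rank s) {x ∈ s | k ≤ rank s x} = Ico k #s := by
    rw [← filter_image, image_rank]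
    ext i
    simp only [mem_filter, mem_range, mem_Ico, and_comm]
  rw [← card_image_of_injOn ((rank_injOn s).mono (filter_subset _ s)), himage, Nat.card_Ico]

lemma rank_filter_le_rank (s : Finset α) (k : ℕ) (x : α) :
    rank {y ∈ s | k ≤ rank s y} x = rank s x - k := by
  have hrank : ∀ y < x, rank {z ∈ s | z < x} y = rank s y := fun y hy => by
    simp only [rank, filter_filter]
    exact congrArg card (filter_congr fun z _ => ⟨And.right, fun hz => ⟨hz.trans hy, hz⟩⟩)
  change _ = #{z ∈ s | z < x} - k
  rw [← card_filter_le_rank, rank, filter_filter, filter_filter]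
  refine congrArg card (filter_congr fun y _ => ?_)
  rw [and_comm]
  exact and_congr_right fun hy => by rw [hrank y hy]

lemma rank_union {s t : Finset α} (h : Disjoint s t) (x : α) :
    rank (s ∪ t) x = rank s x + rank t x := by
  rw [rank, filter_union, card_union_of_disjoint (disjoint_filter_filter h)]
  rfl

end Rank

section Sums

lemma sum_eq_sum_card_filter_lt {ι : Type*} [Fintype ι] {f : ι → ℕ} {q : ℕ} (hf : ∀ i, f i ≤ q) :
    ∑ i, f i = ∑ k ∈ range q, #{i | k < f i} := by
  simp only [card_filter]
  rw [sum_comm]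
  refine sum_congr rfl fun i _ => ?_
  have hfilter : {k ∈ range q | k < f i} = range (f i) := by
    ext k
    have := hf i
    simp only [mem_filter, mem_range]
    omega
  rw [← card_filter, hfilter, card_range]

lemma sum_range_sum_range_succ {R : Type*} [CommRing R] (f : ℕ → R) (q : ℕ) :
    ∑ k ∈ range q, ∑ j ∈ range (k + 1), f j = ∑ j ∈ range q, ((q : R) - j) * f j := by
  induction q with
  | zero => simp
  | succ q ih =>
    have hsplit : ∀ j : ℕ, ((q + 1 : ℕ) - j : R) * f j = (q - j) * f j + f j := fun j => by
      push_cast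
      ring
    simp only [hsplit, sum_add_distrib, ← ih, sum_range_succ, sub_self, zero_mul, add_zero]

end Sums

section Drift

lemma sign_true : sign true = 1 := rfl

lemma sign_false : sign false = -1 := rfl

lemma sign_not (b : Bool) : sign (!b) = -sign b := by cases b <;> rfl

lemma abs_sign (b : Bool) : |sign b| = 1 := by cases b <;> rfl

/-- The partial sum `σ₁ + ⋯ + σᵢ` of the preferences of the first `i` diners. -/
def prefixSum (σ : Fin n → Bool) (i : ℕ) : ℤ :=
  ∑ j ∈ ({j | (j : ℕ) < i} : Finset (Fin n)), sign (σ j)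

lemma prefixSum_zero (σ : Fin n → Bool) : prefixSum σ 0 = 0 := by simp [prefixSum]

lemma prefixSum_succ (σ : Fin n → Bool) (j : Fin n) :
    prefixSum σ (j + 1) = prefixSum σ j + sign (σ j) := by
  have hinsert : ({x : Fin n | (x : ℕ) < j + 1} : Finset (Fin n)) =
      insert j ({x : Fin n | (x : ℕ) < j} : Finset (Fin n)) := by
    ext x
    simp only [mem_filter, mem_univ, true_and, mem_insert, Fin.ext_iff]
    omega
  rw [prefixSum, hinsert, sum_insert (by simp), add_comm]
  rfl

lemma prefixSum_cons (b : Bool) (τ : Fin n → Bool) (i : ℕ) :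
    prefixSum (Fin.cons b τ : Fin (n + 1) → Bool) (i + 1) = sign b + prefixSum τ i := by
  simp [prefixSum, sum_filter, Fin.sum_univ_succ]

lemma prefixSum_not (σ : Fin n → Bool) (i : ℕ) : prefixSum (fun j => !σ j) i = -prefixSum σ i := by
  simp only [prefixSum, sign_not, sum_neg_distrib]

lemma abs_prefixSum_sub_le (σ : Fin n → Bool) {i j : ℕ} (hij : i ≤ j) (hj : j ≤ n) :
    |prefixSum σ j - prefixSum σ i| ≤ (j : ℤ) - i := by
  induction j, hij using Nat.le_induction with
  | base => simp
  | succ j hij ih =>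
    have hstep := prefixSum_succ σ ⟨j, hj⟩
    have hsign := abs_sign (σ ⟨j, hj⟩)
    have := ih (by omega)
    grind

lemma abs_prefixSum_le (σ : Fin n → Bool) {i : ℕ} (hi : i ≤ n) : |prefixSum σ i| ≤ i := by
  simpa [prefixSum_zero] using abs_prefixSum_sub_le σ (Nat.zero_le i) hi

lemma drift_le_iff {σ : Fin n → Bool} {h : ℕ} : drift σ ≤ h ↔ ∀ i ≤ n, prefixSum σ i ≤ h := by
  simp only [drift, Finset.sup_le_iff, mem_range, Nat.lt_succ_iff, Int.toNat_le]
  rfl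

lemma prefixSum_le_drift (σ : Fin n → Bool) {i : ℕ} (hi : i ≤ n) : prefixSum σ i ≤ drift σ :=
  drift_le_iff.1 le_rfl i hi

lemma neg_prefixSum_le_drift_not (σ : Fin n → Bool) {i : ℕ} (hi : i ≤ n) :
    -prefixSum σ i ≤ drift fun j => !σ j := by
  rw [← prefixSum_not]
  exact prefixSum_le_drift _ hi

lemma exists_prefixSum_eq_drift (σ : Fin n → Bool) : ∃ i ≤ n, prefixSum σ i = drift σ := by
  obtain ⟨i, hi, hdrift⟩ :=
    exists_mem_eq_sup (range (n + 1)) nonempty_range_add_one fun i => (prefixSum σ i).toNat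
  change drift σ = _ at hdrift
  rw [mem_range] at hi
  rcases lt_or_ge 0 (prefixSum σ i) with hpos | hneg
  · exact ⟨i, by omega, by omega⟩
  · exact ⟨0, by omega, by rw [prefixSum_zero]; omega⟩

lemma drift_le (σ : Fin n → Bool) : drift σ ≤ n :=
  drift_le_iff.2 fun i hi => by
    have := abs_le.1 (abs_prefixSum_le σ hi)
    omega

lemma drift_cons (b : Bool) (τ : Fin n → Bool) :
    drift (Fin.cons b τ : Fin (n + 1) → Bool) = (sign b + drift τ).toNat := by
  apply le_antisymm
  · refine drift_le_iff.2 fun i hi => ?_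
    cases i with
    | zero => rw [prefixSum_zero]; omega
    | succ i =>
      have := prefixSum_le_drift τ (Nat.le_of_succ_le_succ hi)
      rw [prefixSum_cons]
      omega
  · obtain ⟨i, hi, hdrift⟩ := exists_prefixSum_eq_drift τ
    have := prefixSum_le_drift (Fin.cons b τ : Fin (n + 1) → Bool) (Nat.succ_le_succ hi)
    rw [prefixSum_cons] at this
    omega

-- Between a visit to height `h` and one to height `-h` the walk needs `2 * h` further steps.
lemma three_mul_le_of_le_drift {σ : Fin n → Bool} {h : ℕ} (hpos : h ≤ drift σ)
    (hneg : h ≤ drift fun j => !σ j) : 3 * h ≤ n := by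
  obtain ⟨i, hi, hdrift⟩ := exists_prefixSum_eq_drift σ
  obtain ⟨j, hj, hdrift_not⟩ := exists_prefixSum_eq_drift fun j => !σ j
  rw [prefixSum_not] at hdrift_not
  have hstart_i := abs_le.1 (abs_prefixSum_le σ hi)
  have hstart_j := abs_le.1 (abs_prefixSum_le σ hj)
  rcases le_total i j with hij | hji
  · have := abs_le.1 (abs_prefixSum_sub_le σ hij hj)
    omega
  · have := abs_le.1 (abs_prefixSum_sub_le σ hji hi)
    omega

lemma card_le_drift_succ (n h : ℕ) :
    #{σ : Fin (n + 1) → Bool | h + 1 ≤ drift σ} =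
      #{τ : Fin n → Bool | h ≤ drift τ} + #{τ : Fin n → Bool | h + 2 ≤ drift τ} := by
  have htrue (τ : Fin n → Bool) :
      h + 1 ≤ drift (Fin.cons true τ : Fin (n + 1) → Bool) ↔ h ≤ drift τ := by
    rw [drift_cons, sign_true]
    omega
  have hfalse (τ : Fin n → Bool) :
      h + 1 ≤ drift (Fin.cons false τ : Fin (n + 1) → Bool) ↔ h + 2 ≤ drift τ := by
    rw [drift_cons, sign_false]
    omega
  simp only [card_filter]
  rw [← (Fin.consEquiv fun _ : Fin (n + 1) => Bool).sum_comp, Fintype.sum_prod_type]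
  rw [Fintype.sum_bool]
  exact congrArg₂ (· + ·) (sum_congr rfl fun τ _ => if_congr (htrue τ) rfl rfl)
    (sum_congr rfl fun τ _ => if_congr (hfalse τ) rfl rfl)

theorem card_le_drift (n : ℕ) : ∀ h k : ℕ, h + 2 * k = n + 1 →
    #{σ : Fin n → Bool | h ≤ drift σ} = 2 * ∑ j ∈ range k, n.choose j := by
  induction n with
  | zero =>
    intro h k hk
    obtain ⟨rfl, rfl⟩ : h = 1 ∧ k = 0 := by omega
    rfl
  | succ n ih =>
    rintro (_ | h) k hk
    · obtain ⟨m, rfl, rfl⟩ : ∃ m, k = m + 1 ∧ n = 2 * m := ⟨k - 1, by omega, by omega⟩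
      simp only [zero_le, filter_true, card_univ, Fintype.card_pi, Fintype.card_bool, prod_const,
        Fintype.card_fin, Nat.sum_range_choose_halfway, pow_succ, pow_mul]
      ring
    cases k with
    | zero =>
      refine card_eq_zero.2 (filter_eq_empty_iff.2 fun σ _ => ?_)
      have := drift_le σ
      omega
    | succ k =>
      rw [card_le_drift_succ, ih h (k + 1) (by omega), ih (h + 2) k (by omega),
        sum_range_succ' (fun j => (n + 1).choose j), sum_range_succ' (fun j => n.choose j)]
      simp only [Nat.choose_succ_succ, sum_add_distrib, Nat.choose_zero_right]
      ring

lemma card_le_drift_not (n h : ℕ) :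
    #{σ : Fin n → Bool | h ≤ drift fun j => !σ j} = #{σ : Fin n → Bool | h ≤ drift σ} :=
  card_equiv ((Equiv.refl _).arrowCongr Equiv.boolNot) fun σ => by
    simp [Equiv.arrowCongr, Function.comp_def]

theorem card_drift_add_two_mul_le {n k : ℕ} (hk : 3 * k ≤ n) :
    #{σ : Fin n → Bool | drift σ + 2 * k ≤ n ∧ drift (fun j => !σ j) + 2 * k ≤ n} +
      4 * ∑ j ∈ range k, n.choose j = 2 ^ n := by
  obtain ⟨h, hh⟩ : ∃ h, h + 2 * k = n + 1 := ⟨n + 1 - 2 * k, by omega⟩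
  have hcompl : univ.filter (fun σ : Fin n → Bool =>
      ¬(drift σ + 2 * k ≤ n ∧ drift (fun j => !σ j) + 2 * k ≤ n)) =
      univ.filter (fun σ => h ≤ drift σ) ∪ univ.filter (fun σ => h ≤ drift fun j => !σ j) := by
    ext σ
    simp only [mem_filter, mem_univ, true_and, mem_union]
    omega
  have hdisj : Disjoint ({σ | h ≤ drift σ} : Finset (Fin n → Bool))
      ({σ | h ≤ drift fun j => !σ j} : Finset (Fin n → Bool)) :=
    disjoint_filter.2 fun σ _ hpos hneg => by
      have := three_mul_le_of_le_drift hpos hneg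
      omega
  have htotal := card_filter_add_card_filter_not (s := univ) fun σ : Fin n → Bool =>
    drift σ + 2 * k ≤ n ∧ drift (fun j => !σ j) + 2 * k ≤ n
  rw [hcompl, card_union_of_disjoint hdisj, card_le_drift_not, card_le_drift n h k hh, card_univ,
    Fintype.card_fun, Fintype.card_bool, Fintype.card_fin] at htotal
  omega

end Drift

section Benches

lemma balanced_iff {σ : Fin n → Bool} {β : BenchCollection n q} {i : Fin q} :
    Balanced σ β i ↔ σ (β.b i) = !σ (β.a i) := by
  unfold Balanced
  cases σ (β.a i) <;> cases σ (β.b i) <;> simp [sign]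

lemma balanced_not_iff {σ : Fin n → Bool} {β : BenchCollection n q} {i : Fin q} :
    Balanced (fun j => !σ j) β i ↔ Balanced σ β i := by
  simp [balanced_iff]

namespace BenchCollection

/-- The members of the benches, indexed by the bench and the position `0`, `1`, `2` in it. -/
def member (β : BenchCollection n q) (x : Fin q × Fin 3) : Fin n :=
  ![β.a x.1, β.b x.1, β.c x.1] x.2

lemma member_mem (β : BenchCollection n q) (i : Fin q) (r : Fin 3) :
    β.member (i, r) ∈ ({β.a i, β.b i, β.c i} : Finset (Fin n)) := by
  fin_cases r <;> simp [member]

lemma member_injective (β : BenchCollection n q) : Function.Injective β.member := by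
  rintro ⟨i, r⟩ ⟨j, s⟩ h
  obtain rfl : i = j := by
    by_contra hij
    exact disjoint_left.1 (β.disj i j hij) (β.member_mem i r) (h ▸ β.member_mem j s)
  have hab := β.hab i
  have hbc := β.hbc i
  have hac := hab.trans hbc
  fin_cases r <;> fin_cases s <;>
    simp_all [member, hab.ne, hbc.ne, hac.ne, hab.ne', hbc.ne', hac.ne']

lemma c_injective (β : BenchCollection n q) : β.c.Injective := fun i j h => by
  simpa using β.member_injective (a₁ := (i, 2)) (a₂ := (j, 2)) h

lemma notMem_image_c_and_lt_c (β : BenchCollection n q) {i : Fin q} {x : Fin n}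
    (hx : x = β.a i ∨ x = β.b i) : x ∉ univ.image β.c ∧ x < β.c i := by
  have hac : ∀ j, β.c j ≠ β.a i := fun j =>
    β.member_injective.ne (a₁ := (j, 2)) (a₂ := (i, 0)) (by simp)
  have hbc : ∀ j, β.c j ≠ β.b i := fun j =>
    β.member_injective.ne (a₁ := (j, 2)) (a₂ := (i, 1)) (by simp)
  rcases hx with rfl | rfl
  · simpa [hac] using (β.hab i).trans (β.hbc i)
  · simpa [hbc] using β.hbc i

/-- The set of diners sitting on some bench. -/
def members (β : BenchCollection n q) : Finset (Fin n) := univ.image β.member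

lemma mem_members {β : BenchCollection n q} {j : Fin n} :
    j ∈ β.members ↔ ∃ i, β.a i = j ∨ β.b i = j ∨ β.c i = j := by
  simp [members, member, Prod.exists, Fin.exists_fin_succ]

lemma card_members (β : BenchCollection n q) : #β.members = 3 * q := by
  rw [members, card_image_of_injective _ β.member_injective, card_univ, Fintype.card_prod,
    Fintype.card_fin, Fintype.card_fin, mul_comm]

lemma three_mul_le (β : BenchCollection n q) : 3 * q ≤ n := by
  simpa [card_members] using card_le_univ β.members

lemma sum_members {M : Type*} [AddCommMonoid M] (β : BenchCollection n q) (f : Fin n → M) :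
    ∑ j ∈ β.members, f j = ∑ i, (f (β.a i) + f (β.b i) + f (β.c i)) := by
  simp [members, sum_image β.member_injective.injOn, Fintype.sum_prod_type, Fin.sum_univ_three,
    member]

-- A prefix contains none of a balanced bench, or its first member, or the two opposite ones,
-- or all three, so that each bench contributes at most `1` to the prefix sum.
lemma drift_add_two_mul_le {σ : Fin n → Bool} (β : BenchCollection n q)
    (hβ : ∀ i, Balanced σ β i) : drift σ + 2 * q ≤ n := by
  have hq := β.three_mul_le
  suffices h : drift σ ≤ n - 2 * q by omega
  refine drift_le_iff.2 fun t _ => ?_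
  set g : Fin n → ℤ := fun j => if (j : ℕ) < t then sign (σ j) else 0 with hg
  have hbench : ∀ i, g (β.a i) + g (β.b i) + g (β.c i) ≤ 1 := fun i => by
    have hab := Fin.lt_def.1 (β.hab i)
    have hbc := Fin.lt_def.1 (β.hbc i)
    have hbal : sign (σ (β.a i)) + sign (σ (β.b i)) = 0 := hβ i
    have hsign_a := abs_le.1 (abs_sign (σ (β.a i))).le
    have hsign_c := abs_le.1 (abs_sign (σ (β.c i))).le
    simp only [hg]
    split_ifs <;> omega
  have hrest : ∀ j, g j ≤ 1 := fun j => by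
    have := abs_le.1 (abs_sign (σ j)).le
    simp only [hg]
    split_ifs <;> omega
  calc
    prefixSum σ t = ∑ j, g j := sum_filter ..
    _ = ∑ i, (g (β.a i) + g (β.b i) + g (β.c i)) + ∑ j ∈ β.membersᶜ, g j := by
      rw [← sum_members, sum_add_sum_compl]
    _ ≤ #(univ : Finset (Fin q)) • 1 + #β.membersᶜ • 1 :=
      add_le_add (sum_le_card_nsmul _ _ _ fun i _ => hbench i)
        (sum_le_card_nsmul _ _ _ fun j _ => hrest j)
    _ = ((n - 2 * q : ℕ) : ℤ) := by
      rw [card_compl, card_members, card_fin, Fintype.card_fin]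
      simp only [nsmul_eq_mul, mul_one]
      omega

end BenchCollection

lemma exists_forall_balanced_of_injective {σ : Fin n → Bool} {p m c : Fin q → Fin n}
    (hp : p.Injective) (hm : m.Injective) (hc : c.Injective) (hpσ : ∀ i, σ (p i) = true)
    (hmσ : ∀ i, σ (m i) = false) (hpc : ∀ i, p i < c i) (hmc : ∀ i, m i < c i)
    (hpc_ne : ∀ i j, p i ≠ c j) (hmc_ne : ∀ i j, m i ≠ c j) :
    ∃ β : BenchCollection n q, ∀ i, Balanced σ β i := by
  have hpm_ne : ∀ i j, p i ≠ m j := fun i j h => by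
    have := hpσ i
    simp [h, hmσ j] at this
  have hpair : ∀ i, ({min (p i) (m i), max (p i) (m i), c i} : Finset (Fin n)) =
      {p i, m i, c i} := fun i => by
    rcases le_total (p i) (m i) with h | h <;> simp [h, insert_comm]
  refine ⟨⟨fun i => min (p i) (m i), fun i => max (p i) (m i), c,
    fun i => min_lt_max.2 (hpm_ne i i), fun i => max_lt (hpc i) (hmc i), fun i j hij => ?_⟩,
    fun i => ?_⟩
  · rw [hpair, hpair]
    simp [disjoint_left, hp.ne hij, hm.ne hij, hc.ne hij, hpm_ne, hpc_ne, hmc_ne,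
      fun i j => (hpm_ne i j).symm, fun i j => (hpc_ne i j).symm, fun i j => (hmc_ne i j).symm]
  · rw [balanced_iff]
    rcases le_total (p i) (m i) with h | h <;> simp [h, hpσ, hmσ]

/-- The set of diners preferring side `b`. -/
def prefer (σ : Fin n → Bool) (b : Bool) : Finset (Fin n) := {j | σ j = b}

lemma mem_prefer {σ : Fin n → Bool} {b : Bool} {j : Fin n} : j ∈ prefer σ b ↔ σ j = b := by
  simp [prefer]

lemma disjoint_prefer (σ : Fin n → Bool) : Disjoint (prefer σ true) (prefer σ false) :=
  disjoint_left.2 fun j => by simp +contextual [mem_prefer]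

lemma card_prefer_add (σ : Fin n → Bool) : #(prefer σ true) + #(prefer σ false) = n := by
  simpa [prefer] using card_filter_add_card_filter_not (s := univ) fun j => σ j = true

lemma sum_sign (σ : Fin n → Bool) (s : Finset (Fin n)) :
    ∑ j ∈ s, sign (σ j) = #{j ∈ s | σ j = true} - #{j ∈ s | σ j = false} := by
  simp only [card_filter, Nat.cast_sum, ← sum_sub_distrib]
  exact sum_congr rfl fun j _ => by cases σ j <;> rfl

lemma prefixSum_eq_rank_sub_rank (σ : Fin n → Bool) (x : Fin n) :
    prefixSum σ x = rank (prefer σ true) x - rank (prefer σ false) x := by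
  rw [prefixSum, sum_sign]
  simp only [rank, prefer, filter_filter, and_comm, Fin.lt_def]

lemma prefixSum_eq_card_sub_card (σ : Fin n → Bool) :
    prefixSum σ n = #(prefer σ true) - #(prefer σ false) := by
  simp [prefixSum, sum_sign, prefer]

/-- The diners that are neither among the first `k` diners preferring right nor among the
first `k` diners preferring left. -/
def surplus (σ : Fin n → Bool) (k : ℕ) : Finset (Fin n) :=
  {j ∈ prefer σ true | k ≤ rank (prefer σ true) j} ∪
    {j ∈ prefer σ false | k ≤ rank (prefer σ false) j}

lemma rank_surplus (σ : Fin n → Bool) (k : ℕ) (x : Fin n) : rank (surplus σ k) x =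
    (rank (prefer σ true) x - k) + (rank (prefer σ false) x - k) := by
  rw [surplus, rank_union (disjoint_filter_filter (disjoint_prefer σ)), rank_filter_le_rank,
    rank_filter_le_rank]

lemma card_surplus (σ : Fin n → Bool) (k : ℕ) : #(surplus σ k) =
    (#(prefer σ true) - k) + (#(prefer σ false) - k) := by
  rw [surplus, card_union_of_disjoint (disjoint_filter_filter (disjoint_prefer σ)),
    card_filter_le_rank, card_filter_le_rank]

lemma le_rank_of_mem_surplus {σ : Fin n → Bool} {k : ℕ} {x : Fin n} (hx : x ∈ surplus σ k) :
    k ≤ rank (prefer σ (σ x)) x := by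
  rcases mem_union.1 hx with h | h <;>
    (rw [mem_filter, mem_prefer] at h; rw [h.1]; exact h.2)

lemma lt_rank_prefer_of_rank_surplus {σ : Fin n → Bool} {k i : ℕ} {x : Fin n} (hi : i < k)
    (hdrift : drift σ + 2 * k ≤ n) (hdrift_not : drift (fun j => !σ j) + 2 * k ≤ n)
    (hx : x ∈ surplus σ k) (hrank : rank (surplus σ k) x = n - 3 * k + i) (b : Bool) :
    i < rank (prefer σ b) x := by
  have hle := le_rank_of_mem_surplus hx
  have hsum := prefixSum_eq_rank_sub_rank σ x
  have hnext := prefixSum_succ σ x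
  have hupper := prefixSum_le_drift σ (i := x + 1) x.isLt
  have hlower := neg_prefixSum_le_drift_not σ (i := x + 1) x.isLt
  rw [rank_surplus] at hrank
  cases hσ : σ x <;> rw [hσ] at hle hnext <;> cases b <;>
    simp only [sign_true, sign_false] at hnext <;> omega

theorem exists_forall_balanced {σ : Fin n → Bool} {k : ℕ} (hk : 3 * k ≤ n)
    (hdrift : drift σ + 2 * k ≤ n) (hdrift_not : drift (fun j => !σ j) + 2 * k ≤ n) :
    ∃ β : BenchCollection n k, ∀ i, Balanced σ β i := by
  have hcard := card_prefer_add σ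
  have hsum := prefixSum_eq_card_sub_card σ
  have hupper := prefixSum_le_drift σ le_rfl
  have hlower := neg_prefixSum_le_drift_not σ le_rfl
  have hcard_surplus := card_surplus σ k
  have hprefer : ∀ b, ∀ i : Fin k, ∃ x ∈ prefer σ b, rank (prefer σ b) x = i := fun b i =>
    exists_mem_rank_eq (by have := i.isLt; cases b <;> omega)
  have htop : ∀ i : Fin k, ∃ x ∈ surplus σ k, rank (surplus σ k) x = n - 3 * k + i := fun i =>
    exists_mem_rank_eq (by have := i.isLt; omega)
  choose x hx hx_rank using hprefer
  choose c hc hc_rank using htop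
  have hxσ : ∀ b i, σ (x b i) = b := fun b i => mem_prefer.1 (hx b i)
  have hx_inj : ∀ b, (x b).Injective := fun b i j h =>
    Fin.ext (by rw [← hx_rank b i, ← hx_rank b j, h])
  have hc_inj : c.Injective := fun i j h => by
    have := hc_rank i
    rw [h, hc_rank j] at this
    omega
  have hxc : ∀ b i, x b i < c i := fun b i => by
    refine lt_of_rank_lt_rank (s := prefer σ b) ?_
    rw [hx_rank]
    exact lt_rank_prefer_of_rank_surplus i.isLt hdrift hdrift_not (hc i) (hc_rank i) b
  have hxc_ne : ∀ b i j, x b i ≠ c j := fun b i j h => by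
    have hle := le_rank_of_mem_surplus (hc j)
    rw [← h, hxσ, hx_rank] at hle
    omega
  exact exists_forall_balanced_of_injective (hx_inj true) (hx_inj false) hc_inj (hxσ true)
    (hxσ false) (hxc true) (hxc false) (hxc_ne true) (hxc_ne false)

theorem exists_forall_balanced_iff {σ : Fin n → Bool} {k : ℕ} :
    (∃ β : BenchCollection n k, ∀ i, Balanced σ β i) ↔
      3 * k ≤ n ∧ drift σ + 2 * k ≤ n ∧ drift (fun j => !σ j) + 2 * k ≤ n := by
  constructor
  · rintro ⟨β, hβ⟩
    exact ⟨β.three_mul_le, β.drift_add_two_mul_le hβ,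
      β.drift_add_two_mul_le fun i => balanced_not_iff.2 (hβ i)⟩
  · rintro ⟨hk, hdrift, hdrift_not⟩
    exact exists_forall_balanced hk hdrift hdrift_not

end Benches

section Table

variable [NeZero n]

lemma leftNapkin_eq_sub_one (s : Fin n) : leftNapkin s = s - 1 := by
  ext
  rw [Fin.sub_def, leftNapkin, Fin.val_one']
  rcases (Nat.one_le_iff_ne_zero.2 (NeZero.ne n)).eq_or_lt with h | h
  · simp [← h]
  · simp only [Nat.mod_eq_of_lt h, add_comm]

/-- The napkin on side `b` of seat `s`, the right side being `b = true`. -/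
def napkinOn (b : Bool) (s : Fin n) : Fin n := if b then s else s - 1

/-- The seat next to seat `s` on side `b`. -/
def seatOn (b : Bool) (s : Fin n) : Fin n := if b then s + 1 else s - 1

lemma seatOn_not_seatOn (b : Bool) (s : Fin n) : seatOn (!b) (seatOn b s) = s := by
  cases b <;> simp [seatOn]

lemma napkinOn_eq_napkinOn_iff {b c : Bool} {s t : Fin n} (h : s ≠ t) :
    napkinOn b s = napkinOn c t ↔ c = !b ∧ t = seatOn b s := by
  cases b <;> cases c <;> simp [napkinOn, seatOn, h, eq_sub_iff_add_eq, eq_comm]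

/-- The diner sitting next to diner `j` on side `b` in the seating order `w`. -/
def neighbour (w : Equiv.Perm (Fin n)) (b : Bool) (j : Fin n) : Fin n := w (seatOn b (w.symm j))

lemma neighbour_not_neighbour (w : Equiv.Perm (Fin n)) (b : Bool) (j : Fin n) :
    neighbour w (!b) (neighbour w b j) = j := by
  simp [neighbour, seatOn_not_seatOn]

lemma neighbour_injective (w : Equiv.Perm (Fin n)) (b : Bool) : (neighbour w b).Injective :=
  Function.LeftInverse.injective (neighbour_not_neighbour w b)

/-- The side on which a diner in seat `s` who prefers side `b` claims a napkin when the napkins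
in `taken` are already claimed, and `none` if that diner ends up napkinless. -/
def choice (taken : Finset (Fin n)) (b : Bool) (s : Fin n) : Option Bool :=
  if napkinOn b s ∉ taken then some b
  else if napkinOn (!b) s ∉ taken then some (!b)
  else none

lemma choice_eq_none_iff {taken : Finset (Fin n)} {b : Bool} {s : Fin n} :
    choice taken b s = none ↔ ∀ c, napkinOn c s ∈ taken := by
  unfold choice
  cases b <;> split_ifs <;> simp_all

lemma choice_eq_some_self_iff {taken : Finset (Fin n)} {b : Bool} {s : Fin n} :
    choice taken b s = some b ↔ napkinOn b s ∉ taken := by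
  unfold choice
  cases b <;> split_ifs <;> simp_all

/-- The effect of the arrival of diner `j` on the set of claimed napkins and the set of
napkinless diners. -/
def serve (σ : Fin n → Bool) (w : Equiv.Perm (Fin n)) (st : Finset (Fin n) × Finset (Fin n))
    (j : Fin n) : Finset (Fin n) × Finset (Fin n) :=
  match choice st.1 (σ j) (w.symm j) with
  | some b => (insert (napkinOn b (w.symm j)) st.1, st.2)
  | none => (st.1, insert j st.2)

lemma dine_eq_foldl_serve (σ : Fin n → Bool) (w : Equiv.Perm (Fin n)) :
    dine σ w = (List.finRange n).foldl (serve σ w) (∅, ∅) := by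
  unfold dine
  congr 1
  funext st j
  simp only [serve, choice, leftNapkin_eq_sub_one]
  cases σ j <;> simp only [napkinOn, Bool.not_true, Bool.not_false, Bool.false_eq_true, if_true,
    if_false] <;> split_ifs <;> rfl

/-- The claimed napkins and the napkinless diners after the arrival of the diners below `i`. -/
def stateBefore (σ : Fin n → Bool) (w : Equiv.Perm (Fin n)) (i : ℕ) :
    Finset (Fin n) × Finset (Fin n) :=
  ((List.finRange n).take i).foldl (serve σ w) (∅, ∅)

lemma stateBefore_zero (σ : Fin n → Bool) (w : Equiv.Perm (Fin n)) :
    stateBefore σ w 0 = (∅, ∅) := rfl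

/-- The side on which diner `j` claims a napkin, and `none` if `j` is napkinless. -/
def claim (σ : Fin n → Bool) (w : Equiv.Perm (Fin n)) (j : Fin n) : Option Bool :=
  choice (stateBefore σ w j).1 (σ j) (w.symm j)

lemma stateBefore_succ (σ : Fin n → Bool) (w : Equiv.Perm (Fin n)) (j : Fin n) :
    stateBefore σ w (j + 1) = match claim σ w j with
      | some b => (insert (napkinOn b (w.symm j)) (stateBefore σ w j).1, (stateBefore σ w j).2)
      | none => ((stateBefore σ w j).1, insert j (stateBefore σ w j).2) := by
  simp [stateBefore, List.take_add_one, List.foldl_append, serve, claim]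

lemma mem_stateBefore_fst {σ : Fin n → Bool} {w : Equiv.Perm (Fin n)} {i : ℕ} (hi : i ≤ n)
    {x : Fin n} : x ∈ (stateBefore σ w i).1 ↔
      ∃ j : Fin n, ∃ b, (j : ℕ) < i ∧ claim σ w j = some b ∧ napkinOn b (w.symm j) = x := by
  induction i with
  | zero => simp [stateBefore_zero]
  | succ i ih =>
    lift i to Fin n using hi
    have hlt : ∀ j : Fin n, (j : ℕ) < i + 1 ↔ (j : ℕ) < i ∨ j = i := fun j => by omega
    rw [stateBefore_succ]
    simp only [hlt, or_and_right, exists_or, ← ih i.isLt.le]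
    cases h : claim σ w i <;> simp [h, eq_comm, or_comm]

lemma mem_stateBefore_snd {σ : Fin n → Bool} {w : Equiv.Perm (Fin n)} {i : ℕ} (hi : i ≤ n)
    {x : Fin n} : x ∈ (stateBefore σ w i).2 ↔ (x : ℕ) < i ∧ claim σ w x = none := by
  induction i with
  | zero => simp [stateBefore_zero]
  | succ i ih =>
    lift i to Fin n using hi
    have hlt : (x : ℕ) < i + 1 ↔ (x : ℕ) < i ∨ x = i := by omega
    rw [stateBefore_succ, hlt, or_and_right, ← ih i.isLt.le]
    have hself : x = i ∧ claim σ w x = none ↔ x = i ∧ claim σ w i = none :=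
      and_congr_right fun h => by rw [h]
    rw [hself]
    cases claim σ w i <;> simp [or_comm]

lemma mem_napkinless {σ : Fin n → Bool} {w : Equiv.Perm (Fin n)} {j : Fin n} :
    j ∈ napkinless σ w ↔ claim σ w j = none := by
  have hfinal : dine σ w = stateBefore σ w n := by
    rw [dine_eq_foldl_serve, stateBefore, List.take_of_length_le (by simp)]
  rw [napkinless, hfinal, mem_stateBefore_snd le_rfl, and_iff_right j.isLt]

/-- Diner `j` finds the napkin on side `b` already claimed, necessarily by the neighbour there. -/
def Blocked (σ : Fin n → Bool) (w : Equiv.Perm (Fin n)) (b : Bool) (j : Fin n) : Prop :=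
  neighbour w b j < j ∧ claim σ w (neighbour w b j) = some (!b)

lemma napkinOn_mem_stateBefore_iff {σ : Fin n → Bool} {w : Equiv.Perm (Fin n)} {b : Bool}
    {j : Fin n} : napkinOn b (w.symm j) ∈ (stateBefore σ w j).1 ↔ Blocked σ w b j := by
  have hside : ∀ i c, i < j → (napkinOn c (w.symm i) = napkinOn b (w.symm j) ↔
      c = !b ∧ i = neighbour w b j) := fun i c hij => by
    rw [eq_comm, napkinOn_eq_napkinOn_iff (w.symm.injective.ne hij.ne'), Equiv.symm_apply_eq]
    rfl
  rw [mem_stateBefore_fst j.isLt.le, Blocked]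
  constructor
  · rintro ⟨i, c, hij, hclaim, hnapkin⟩
    obtain ⟨rfl, rfl⟩ := (hside i c hij).1 hnapkin
    exact ⟨hij, hclaim⟩
  · rintro ⟨hlt, hclaim⟩
    exact ⟨_, !b, hlt, hclaim, (hside _ _ hlt).2 ⟨rfl, rfl⟩⟩

lemma claim_eq_none_iff {σ : Fin n → Bool} {w : Equiv.Perm (Fin n)} {j : Fin n} :
    claim σ w j = none ↔ ∀ b, Blocked σ w b j := by
  simp only [claim, choice_eq_none_iff, napkinOn_mem_stateBefore_iff]

lemma claim_eq_some_self_iff {σ : Fin n → Bool} {w : Equiv.Perm (Fin n)} {j : Fin n} :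
    claim σ w j = some (σ j) ↔ ¬Blocked σ w (σ j) j := by
  rw [claim, choice_eq_some_self_iff, napkinOn_mem_stateBefore_iff]

lemma blocked_of_claim_eq_some_not {σ : Fin n → Bool} {w : Equiv.Perm (Fin n)} {b : Bool}
    {j : Fin n} (hσ : σ j = b) (h : claim σ w j = some (!b)) : Blocked σ w b j := by
  subst hσ
  by_contra hfree
  simp [claim_eq_some_self_iff.2 hfree] at h

lemma exists_iterate_neighbour {σ : Fin n → Bool} {w : Equiv.Perm (Fin n)} {b : Bool} {j : Fin n}
    (h : claim σ w j = some (!b)) :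
    ∃ d, (∀ e ≤ d, claim σ w ((neighbour w b)^[e] j) = some (!b)) ∧
      σ ((neighbour w b)^[d] j) = (!b) ∧ (neighbour w b)^[d] j ≤ j := by
  induction j using WellFoundedLT.induction with
  | ind j ih =>
    by_cases hσ : σ j = b
    · obtain ⟨hlt, hclaim⟩ := blocked_of_claim_eq_some_not hσ h
      obtain ⟨d, hd, hdσ, hdle⟩ := ih _ hlt hclaim
      refine ⟨d + 1, fun e he => ?_, hdσ, hdle.trans hlt.le⟩
      cases e with
      | zero => exact h
      | succ e => exact hd e (by omega)
    · exact ⟨0, fun e he => by rwa [Nat.le_zero.1 he], Bool.eq_not.2 hσ, le_rfl⟩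

-- From a napkinless diner, walk towards side `b` up to the first diner who got the napkin they
-- prefer; everybody on the way claims a napkin, so no walk runs through the start of another one.
lemma exists_injOn_napkinless (σ : Fin n → Bool) (w : Equiv.Perm (Fin n)) (b : Bool) :
    ∃ f : Fin n → Fin n, Set.InjOn f (napkinless σ w) ∧
      ∀ j ∈ napkinless σ w, f j < j ∧ σ (f j) = (!b) ∧ claim σ w (f j) = some (!b) := by
  have hwalk : ∀ j ∈ napkinless σ w, ∃ d,
      (∀ e < d, claim σ w ((neighbour w b)^[e + 1] j) = some (!b)) ∧
      (neighbour w b)^[d] j < j ∧ σ ((neighbour w b)^[d] j) = (!b) ∧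
      claim σ w ((neighbour w b)^[d] j) = some (!b) := fun j hj => by
    obtain ⟨hlt, hclaim⟩ := claim_eq_none_iff.1 (mem_napkinless.1 hj) b
    obtain ⟨d, hd, hdσ, hdle⟩ := exists_iterate_neighbour hclaim
    exact ⟨d + 1, fun e he => hd e (by omega), hdle.trans_lt hlt, hdσ, hd d le_rfl⟩
  choose! d hd using hwalk
  have hnotMem : ∀ j ∈ napkinless σ w, ∀ e < d j,
      (neighbour w b)^[e + 1] j ∉ (napkinless σ w : Set (Fin n)) := fun j hj e he hmem =>
    absurd ((mem_napkinless.1 hmem).symm.trans ((hd j hj).1 e he)) (by simp)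
  exact ⟨fun j => (neighbour w b)^[d j] j, fun i hi j hj h => eq_of_iterate_eq_iterate
    (neighbour_injective w b) hi hj (hnotMem i hi) (hnotMem j hj) h, fun j hj => (hd j hj).2⟩

theorem exists_forall_balanced_of_le_nu {σ : Fin n → Bool} {w : Equiv.Perm (Fin n)} {k : ℕ}
    (hk : k ≤ nu σ w) : ∃ β : BenchCollection n k, ∀ i, Balanced σ β i := by
  obtain ⟨s, hs, rfl⟩ := exists_subset_card_eq hk
  obtain ⟨p, hp_inj, hp⟩ := exists_injOn_napkinless σ w false
  obtain ⟨m, hm_inj, hm⟩ := exists_injOn_napkinless σ w true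
  set c : Fin #s → Fin n := ⇑(s.orderEmbOfFin rfl)
  have hc : ∀ i, c i ∈ napkinless σ w := fun i => hs (s.orderEmbOfFin_mem rfl i)
  have hc_inj : c.Injective := (s.orderEmbOfFin rfl).injective
  have hne : ∀ x i, claim σ w x ≠ none → x ≠ c i := fun x i hx h =>
    hx (h ▸ mem_napkinless.1 (hc i))
  exact exists_forall_balanced_of_injective
    (fun i j h => hc_inj (hp_inj (hc i) (hc j) h)) (fun i j h => hc_inj (hm_inj (hc i) (hc j) h))
    hc_inj (fun i => (hp _ (hc i)).2.1) (fun i => (hm _ (hc i)).2.1) (fun i => (hp _ (hc i)).1)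
    (fun i => (hm _ (hc i)).1) (fun i j => hne _ j (by simp [(hp _ (hc i)).2.2]))
    (fun i j => hne _ j (by simp [(hm _ (hc i)).2.2]))

end Table

section Arrangement

/-- The condition on a diner `x` and their right neighbour `y` under which exactly the diners in
`M` go napkinless: both neighbours of a diner in `M` arrive earlier and claim the napkin shared
with that diner, and no two adjacent diners outside `M` prefer the napkin between them. -/
def Compatible (σ : Fin n → Bool) (M : Finset (Fin n)) (x y : Fin n) : Prop :=
  (x ∈ M → y ∉ M ∧ σ y = false ∧ y < x) ∧ (y ∈ M → x ∉ M ∧ σ x = true ∧ x < y) ∧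
    (x ∉ M → y ∉ M → σ x = true → σ y = true)

lemma compatible_of_notMem {σ : Fin n → Bool} {M : Finset (Fin n)} {x y : Fin n} (hx : x ∉ M)
    (hy : y ∉ M) (h : σ x = true → σ y = true) : Compatible σ M x y :=
  ⟨fun hxM => absurd hxM hx, fun hyM => absurd hyM hy, fun _ _ => h⟩

lemma compatible_of_mem_right {σ : Fin n → Bool} {M : Finset (Fin n)} {x y : Fin n} (hx : x ∉ M)
    (hy : y ∈ M) (hσ : σ x = true) (hlt : x < y) : Compatible σ M x y :=
  ⟨fun hxM => absurd hxM hx, fun _ => ⟨hx, hσ, hlt⟩, fun _ hyM => absurd hy hyM⟩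

lemma compatible_of_mem_left {σ : Fin n → Bool} {M : Finset (Fin n)} {x y : Fin n} (hx : x ∈ M)
    (hy : y ∉ M) (hσ : σ y = false) (hlt : y < x) : Compatible σ M x y :=
  ⟨fun _ => ⟨hy, hσ, hlt⟩, fun hyM => absurd hyM hy, fun hxM => absurd hx hxM⟩

lemma exists_preferring_of_forall_balanced {σ : Fin n → Bool} {β : BenchCollection n q}
    (hβ : ∀ i, Balanced σ β i) : ∃ p m : Fin q → Fin n, (∀ i, σ (p i) = true) ∧
      (∀ i, σ (m i) = false) ∧ ∀ i x, x = β.a i ∨ x = β.b i ↔ x = p i ∨ x = m i := by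
  have h : ∀ i, ∃ p m : Fin n, σ p = true ∧ σ m = false ∧
      ∀ x, x = β.a i ∨ x = β.b i ↔ x = p ∨ x = m := fun i => by
    have hb := balanced_iff.1 (hβ i)
    cases ha : σ (β.a i) <;> rw [ha] at hb
    · exact ⟨_, _, hb, ha, fun _ => or_comm⟩
    · exact ⟨_, _, ha, hb, fun _ => .rfl⟩
  choose p m hp hm hpm using h
  exact ⟨p, m, hp, hm, hpm⟩

/-- The diners on no bench of `β`, those preferring left before those preferring right. -/
noncomputable def remainder (σ : Fin n → Bool) (β : BenchCollection n q) : List (Fin n) :=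
  {j ∈ β.membersᶜ | σ j = false}.toList ++ {j ∈ β.membersᶜ | σ j = true}.toList

lemma mem_remainder {σ : Fin n → Bool} {β : BenchCollection n q} {j : Fin n} :
    j ∈ remainder σ β ↔ j ∉ β.members := by
  cases h : σ j <;> simp [remainder, h]

lemma length_remainder (σ : Fin n → Bool) (β : BenchCollection n q) :
    (remainder σ β).length = n - 3 * q := by
  have hcard := card_filter_add_card_filter_not (s := β.membersᶜ) fun j => σ j = false
  simp only [Bool.not_eq_false] at hcard
  rw [remainder, List.length_append, length_toList, length_toList, hcard, card_compl,
    Fintype.card_fin, β.card_members]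

lemma pairwise_remainder (σ : Fin n → Bool) (β : BenchCollection n q) :
    (remainder σ β).Pairwise fun x y => σ x = true → σ y = true := by
  refine List.pairwise_append.2 ⟨?_, ?_, ?_⟩
  · exact List.pairwise_of_forall_mem_list fun x hx y _ => by simp_all
  · exact List.pairwise_of_forall_mem_list fun x _ y hy => by simp_all
  · exact fun x _ y hy => by simp_all

lemma isChain_flatten_ofFn_append {α : Type*} {r : α → α → Prop} {p c m : Fin q → α} {l : List α}
    (hpc : ∀ i, r (p i) (c i)) (hcm : ∀ i, r (c i) (m i)) (hmp : ∀ i j, r (m i) (p j))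
    (hml : ∀ i, ∀ x ∈ l.head?, r (m i) x) (hl : l.IsChain r) :
    ((List.ofFn fun i => [p i, c i, m i]).flatten ++ l).IsChain r := by
  induction q with
  | zero => simpa using hl
  | succ q ih =>
    have htail := ih (fun i => hpc i.succ) (fun i => hcm i.succ)
      (fun i j => hmp i.succ j.succ) fun i => hml i.succ
    simp only [List.ofFn_succ, List.flatten_cons, List.cons_append, List.nil_append]
    refine .cons_cons (hpc 0) (.cons_cons (hcm 0) (List.isChain_cons.2 ⟨?_, htail⟩))
    cases q with
    | zero => simpa using hml 0
    | succ q => simpa [List.ofFn_succ] using hmp 0 1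

/-- The list of all diners obtained by placing each bench as `p i`, its largest member, `m i`,
and then the diners on no bench. -/
noncomputable def arrangement (σ : Fin n → Bool) (β : BenchCollection n q)
    (p m : Fin q → Fin n) : List (Fin n) :=
  (List.ofFn fun i => [p i, β.c i, m i]).flatten ++ remainder σ β

lemma length_arrangement (σ : Fin n → Bool) (β : BenchCollection n q) (p m : Fin q → Fin n) :
    (arrangement σ β p m).length = n := by
  have := β.three_mul_le
  simp only [arrangement, List.length_append, List.length_flatten, List.map_ofFn,
    Function.comp_def, List.length_cons, List.length_nil, List.sum_ofFn, sum_const, card_fin,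
    smul_eq_mul, length_remainder]
  omega

lemma mem_arrangement {σ : Fin n → Bool} {β : BenchCollection n q} {p m : Fin q → Fin n}
    (hpm : ∀ i x, x = β.a i ∨ x = β.b i ↔ x = p i ∨ x = m i) (j : Fin n) :
    j ∈ arrangement σ β p m := by
  refine List.mem_append.2 ((em (j ∈ β.members)).imp (fun hj => ?_) mem_remainder.2)
  obtain ⟨i, hi⟩ := BenchCollection.mem_members.1 hj
  have hji := hpm i j
  exact List.mem_flatten.2 ⟨_, List.mem_ofFn.2 ⟨i, rfl⟩, by
    simp only [List.mem_cons, List.not_mem_nil, or_false]; tauto⟩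

lemma isChain_arrangement {σ : Fin n → Bool} {k : ℕ} {β : BenchCollection n (k + 1)}
    {p m : Fin (k + 1) → Fin n} (hpσ : ∀ i, σ (p i) = true) (hmσ : ∀ i, σ (m i) = false)
    (hpm : ∀ i x, x = β.a i ∨ x = β.b i ↔ x = p i ∨ x = m i) :
    (arrangement σ β p m ++ (arrangement σ β p m).head?.toList).IsChain
      (Compatible σ (univ.image β.c)) := by
  have hc : ∀ i, β.c i ∈ univ.image β.c := fun i => mem_image_of_mem _ (mem_univ i)
  have hp := fun i => β.notMem_image_c_and_lt_c ((hpm i (p i)).2 (.inl rfl))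
  have hm := fun i => β.notMem_image_c_and_lt_c ((hpm i (m i)).2 (.inr rfl))
  have hclose : ∀ j ∈ remainder σ β ++ [p 0], j ∉ univ.image β.c := fun j hj hjc => by
    obtain ⟨i, -, rfl⟩ := mem_image.1 hjc
    rcases List.mem_append.1 hj with hj | hj
    · exact mem_remainder.1 hj (BenchCollection.mem_members.2 ⟨i, .inr (.inr rfl)⟩)
    · exact (hp 0).1 (List.mem_singleton.1 hj ▸ hc i)
  have hsorted : (remainder σ β ++ [p 0]).Pairwise fun x y => σ x = true → σ y = true :=
    List.pairwise_append.2 ⟨pairwise_remainder σ β, List.pairwise_singleton _ _,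
      fun x _ y hy _ => by rw [List.mem_singleton.1 hy, hpσ]⟩
  have hhead : (arrangement σ β p m).head?.toList = [p 0] := by
    simp [arrangement, List.ofFn_succ]
  rw [hhead, arrangement, List.append_assoc]
  exact isChain_flatten_ofFn_append
    (fun i => compatible_of_mem_right (hp i).1 (hc i) (hpσ i) (hp i).2)
    (fun i => compatible_of_mem_left (hc i) (hm i).1 (hmσ i) (hm i).2)
    (fun i j => compatible_of_notMem (hm i).1 (hp j).1 (by simp [hmσ i]))
    (fun i x hx => compatible_of_notMem (hm i).1 (hclose x (List.mem_of_mem_head? hx))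
      (by simp [hmσ i]))
    (hsorted.imp_of_mem fun hx hy => compatible_of_notMem (hclose _ hx) (hclose _ hy)).isChain

variable [NeZero n]

section Compatible

variable {σ : Fin n → Bool} {w : Equiv.Perm (Fin n)} {M : Finset (Fin n)}

lemma neighbour_of_mem (hw : ∀ s, Compatible σ M (w s) (w (s + 1))) {j : Fin n} (hj : j ∈ M)
    (b : Bool) :
    neighbour w b j ∉ M ∧ σ (neighbour w b j) = (!b) ∧ neighbour w b j < j := by
  cases b
  · have h := (hw (w.symm j - 1)).2.1
    rw [sub_add_cancel, w.apply_symm_apply] at h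
    exact h hj
  · have h := (hw (w.symm j)).1
    rw [w.apply_symm_apply] at h
    exact h hj

lemma neighbour_of_notMem (hw : ∀ s, Compatible σ M (w s) (w (s + 1))) {j : Fin n} (hj : j ∉ M)
    (hneighbour : neighbour w (σ j) j ∉ M) : σ (neighbour w (σ j) j) = σ j := by
  cases hσ : σ j <;> rw [hσ] at hneighbour
  · have h := (hw (w.symm j - 1)).2.2
    rw [sub_add_cancel, w.apply_symm_apply] at h
    exact Bool.eq_false_iff.2 fun h' => by simp [h hneighbour hj h'] at hσ
  · have h := (hw (w.symm j)).2.2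
    rw [w.apply_symm_apply] at h
    exact h hj hneighbour hσ

lemma claim_eq_ite_of_compatible (hw : ∀ s, Compatible σ M (w s) (w (s + 1))) (j : Fin n) :
    claim σ w j = if j ∈ M then none else some (σ j) := by
  induction j using WellFoundedLT.induction with
  | ind j ih =>
    split_ifs with hj
    · refine claim_eq_none_iff.2 fun b => ?_
      obtain ⟨hnotMem, hσ, hlt⟩ := neighbour_of_mem hw hj b
      exact ⟨hlt, by rw [ih _ hlt, if_neg hnotMem, hσ]⟩
    · refine claim_eq_some_self_iff.2 fun ⟨hlt, hclaim⟩ => ?_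
      rw [ih _ hlt] at hclaim
      split_ifs at hclaim with hneighbour
      simp [neighbour_of_notMem hw hj hneighbour] at hclaim

lemma card_le_nu_of_compatible (hw : ∀ s, Compatible σ M (w s) (w (s + 1))) : #M ≤ nu σ w :=
  card_le_card fun j hj => by rw [mem_napkinless, claim_eq_ite_of_compatible hw, if_pos hj]

end Compatible

lemma exists_isSeating_of_isChain {r : Fin n → Fin n → Prop} {l : List (Fin n)}
    (hlength : l.length = n) (hmem : ∀ j, j ∈ l) (hchain : (l ++ l.head?.toList).IsChain r) :
    ∃ w : Equiv.Perm (Fin n), IsSeating w ∧ ∀ s, r (w s) (w (s + 1)) := by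
  have hsurj : Function.Surjective fun s : Fin n => l[(s : ℕ)] := fun j => by
    obtain ⟨i, hi, rfl⟩ := List.getElem_of_mem (hmem j)
    exact ⟨⟨i, hlength ▸ hi⟩, rfl⟩
  let e : Equiv.Perm (Fin n) := Equiv.ofBijective _ (Finite.surjective_iff_bijective.1 hsurj)
  have he : ∀ s, e s = l[(s : ℕ)] := fun s => rfl
  refine ⟨(Equiv.addRight (e.symm 0)).trans e, fun i hi => ?_, fun s => ?_⟩
  · obtain rfl : i = 0 := Fin.ext hi
    simp
  simp only [Equiv.trans_apply, Equiv.coe_addRight, add_right_comm s 1]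
  generalize s + e.symm 0 = t
  have ht := t.isLt
  obtain ⟨x, l, rfl⟩ := List.exists_cons_of_length_pos (hlength ▸ NeZero.pos n)
  have hlast : (x :: l ++ [x]).length = n + 1 := by rw [List.length_append, hlength]; rfl
  have hr : r (x :: l ++ [x])[(t : ℕ)] (x :: l ++ [x])[(t : ℕ) + 1] :=
    hchain.getElem t (by rw [List.head?_cons, Option.toList_some]; omega)
  rw [List.getElem_append_left (by omega), ← he] at hr
  rcases ht.nat_succ_le.lt_or_eq with hlt | heq
  · rw [List.getElem_append_left (hlt.trans_eq hlength.symm)] at hr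
    simpa only [he (t + 1), Fin.val_add_one_of_lt' hlt] using hr
  · have hzero : t + 1 = 0 := Fin.ext (by simp [Fin.val_add, ← Nat.succ_eq_add_one, heq])
    rw [List.getElem_append_right (hlength.trans heq.symm).le, List.getElem_singleton] at hr
    rwa [hzero, he 0]

theorem exists_isSeating_le_nu {σ : Fin n → Bool} {k : ℕ} {β : BenchCollection n (k + 1)}
    (hβ : ∀ i, Balanced σ β i) : ∃ w : Equiv.Perm (Fin n), IsSeating w ∧ k + 1 ≤ nu σ w := by
  obtain ⟨p, m, hpσ, hmσ, hpm⟩ := exists_preferring_of_forall_balanced hβ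
  obtain ⟨w, hw, hcompatible⟩ := exists_isSeating_of_isChain (length_arrangement σ β p m)
    (mem_arrangement hpm) (isChain_arrangement hpσ hmσ hpm)
  have hcard : #(univ.image β.c) = k + 1 := by
    rw [card_image_of_injective _ β.c_injective, card_fin]
  exact ⟨w, hw, hcard ▸ card_le_nu_of_compatible hcompatible⟩

theorem le_nuMax_iff_exists_balanced {σ : Fin n → Bool} {k : ℕ} :
    k ≤ nuMax σ ↔ ∃ β : BenchCollection n k, ∀ i, Balanced σ β i := by
  constructor
  · intro hk
    cases k with
    | zero => exact exists_forall_balanced_of_le_nu (w := 1) (Nat.zero_le _)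
    | succ k =>
      obtain ⟨w, -, hw⟩ := (Finset.le_sup_iff (Nat.succ_pos k)).1 hk
      exact exists_forall_balanced_of_le_nu hw
  · rintro ⟨β, hβ⟩
    cases k with
    | zero => exact Nat.zero_le _
    | succ k =>
      obtain ⟨w, hw, hk⟩ := exists_isSeating_le_nu hβ
      exact hk.trans (le_sup (f := nu σ) (mem_filter.2 ⟨mem_univ w, hw⟩))

end Arrangement

section Expectation

variable [NeZero n]

theorem card_le_nuMax_add {k : ℕ} (hk : 3 * k ≤ n) :
    #{σ : Fin n → Bool | k ≤ nuMax σ} + 4 * ∑ j ∈ range k, n.choose j = 2 ^ n := by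
  simpa only [le_nuMax_iff_exists_balanced, exists_forall_balanced_iff, hk, true_and] using
    card_drift_add_two_mul_le hk

lemma nuMax_le_div_three (σ : Fin n → Bool) : nuMax σ ≤ n / 3 := by
  obtain ⟨β, -⟩ := le_nuMax_iff_exists_balanced.1 (le_refl (nuMax σ))
  exact (Nat.le_div_iff_mul_le three_pos).2 (mul_comm 3 _ ▸ β.three_mul_le)

theorem sum_nuMax {R : Type*} [CommRing R] (n : ℕ) [NeZero n] :
    ∑ σ : Fin n → Bool, (nuMax σ : R) = 2 ^ n * ((n / 3 : ℕ) : R) -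
      4 * ∑ k ∈ range (n / 3), (((n / 3 : ℕ) : R) - k) * (n.choose k : R) := by
  have hcard : ∀ k ∈ range (n / 3), (#{σ : Fin n → Bool | k < nuMax σ} : R) =
      2 ^ n - 4 * ∑ j ∈ range (k + 1), (n.choose j : R) := fun k hk => by
    have hk3 : 3 * (k + 1) ≤ n := by
      rw [mem_range] at hk
      omega
    rw [eq_sub_iff_add_eq]
    exact_mod_cast congrArg (Nat.cast : ℕ → R) (card_le_nuMax_add hk3)
  calc
    ∑ σ : Fin n → Bool, (nuMax σ : R)
        = ∑ k ∈ range (n / 3), (#{σ : Fin n → Bool | k < nuMax σ} : R) := by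
      exact_mod_cast congrArg (Nat.cast : ℕ → R) (sum_eq_sum_card_filter_lt nuMax_le_div_three)
    _ = ∑ k ∈ range (n / 3), (2 ^ n - 4 * ∑ j ∈ range (k + 1), (n.choose j : R)) :=
      sum_congr rfl hcard
    _ = _ := by
      rw [sum_sub_distrib, ← mul_sum, sum_range_sum_range_succ, sum_const, card_range,
        nsmul_eq_mul, mul_comm]

end Expectation

/-- For `n ≥ 3` and `q = ⌊n/3⌋`, the expected (over uniformly random
preference orders) maximal number of napkinless diners is
`E_n = q - 2^{-(n-2)} ∑_{k<q} (q-k)·C(n,k)`; equivalently,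
`∑_σ ν_max(σ) = 2ⁿ·q - 4·∑_{k<q} (q-k)·C(n,k)`. -/
theorem statement15 (n : ℕ) (hn : 3 ≤ n) (q : ℕ) (hq : q = n / 3) :
    (∑ σ : Fin n → Bool, (nuMax σ : ℚ)) / 2 ^ n
      = (q : ℚ) - (1 / 2 ^ (n - 2)) *
          ∑ k ∈ Finset.range q, ((q : ℚ) - (k : ℚ)) * (n.choose k : ℚ) ∧
    (∑ σ : Fin n → Bool, (nuMax σ : ℤ))
      = 2 ^ n * (q : ℤ) - 4 * ∑ k ∈ Finset.range q, ((q : ℤ) - (k : ℤ)) * (n.choose k : ℤ) := by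
  have : NeZero n := ⟨by omega⟩
  subst hq
  refine ⟨?_, sum_nuMax n⟩
  have hpow : (2 : ℚ) ^ n = 2 ^ (n - 2) * 4 := by
    rw [← pow_sub_mul_pow 2 (show 2 ≤ n by omega)]
    norm_num
  rw [sum_nuMax n, hpow]
  field_simp

end Napkin
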